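/- Let λ > 0 and m, x ∈ ℝ. Then ∫_0^∞ (2πw)^{−1/2} e^{−(x − m)²/(2w)} · (λ²/2) e^{−λ²w/2} dw = (λ/2) e^{−λ|x − m|}. That is, the Laplace distribution with location m and scale 1/λ is a scale mixture of Normal distributions with mean m, where the variance w follows an Exponential distribution with rate λ²/2. -/

import Mathlib

open MeasureTheory

/-!
The mixture integral is an instance of
`∫ w in Ioi 0, w ^ (-1 / 2) * exp (-p * w - q / w) = √(π / p) * exp (-2 * √(p * q))`.
Substituting `w = t ^ 2` and completing the square,
`p * t ^ 2 + q / t ^ 2 = (√p * t - √q / t) ^ 2 + 2 * √(p * q)`, reduces this to a Gaussian integral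
in the variable `u = b * t - c / t`. The latter is evaluated by the Cauchy–Schlömilch substitution:
`du = b * (1 + a / t ^ 2) dt` with `a = c / b`, and since `t ↦ a / t` sends `u` to `-u`, both
summands of this weight contribute equally when the integrand is an even function of `u`.
-/

open Real Set

section CauchySchlomilch

variable {E : Type*} [NormedAddCommGroup E] [NormedSpace ℝ E] {a b c : ℝ}

lemma rpow_neg_one_sub_one {t : ℝ} (ht : 0 ≤ t) : t ^ (-1 - 1 : ℝ) = (t ^ 2)⁻¹ := by
  rw [show (-1 - 1 : ℝ) = -2 by norm_num, rpow_neg ht, rpow_two]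

lemma integral_Ioi_div_sq_smul_comp_div (f : ℝ → E) (ha : 0 < a) :
    ∫ t in Ioi 0, (a / t ^ 2) • f (a / t) = ∫ t in Ioi 0, f t := by
  have inversion := integral_comp_rpow_Ioi (fun s ↦ f (a * s)) (neg_ne_zero.2 one_ne_zero)
  have scaling := integral_comp_mul_left_Ioi' f 0 ha
  rw [mul_zero] at scaling
  rw [← scaling, ← inversion, ← integral_smul]
  refine setIntegral_congr_fun measurableSet_Ioi fun t ht ↦ ?_
  simp only [abs_neg, abs_one, one_mul, rpow_neg_one_sub_one (le_of_lt ht), rpow_neg_one, smul_smul,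
    div_eq_mul_inv]

lemma integrableOn_Ioi_div_sq_smul_comp_div_iff (f : ℝ → E) (ha : 0 < a) :
    IntegrableOn (fun t ↦ (a / t ^ 2) • f (a / t)) (Ioi 0) ↔ IntegrableOn f (Ioi 0) := by
  have inversion := integrableOn_Ioi_comp_rpow_iff (fun s ↦ f (a * s)) (neg_ne_zero.2 one_ne_zero)
  have scaling := integrableOn_Ioi_comp_mul_left_iff f 0 ha
  rw [mul_zero] at scaling
  rw [← scaling, ← inversion]
  refine Iff.trans ?_ (integrable_fun_smul_iff ha.ne' _)
  refine integrableOn_congr_fun (fun t ht ↦ ?_) measurableSet_Ioi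
  simp only [abs_neg, abs_one, one_mul, rpow_neg_one_sub_one (le_of_lt ht), rpow_neg_one, smul_smul,
    div_eq_mul_inv]

lemma integrableOn_Ioi_of_one_add_div_sq_smul {g : ℝ → E} (ha : 0 ≤ a)
    (hg : IntegrableOn (fun t ↦ (1 + a / t ^ 2) • g t) (Ioi 0)) : IntegrableOn g (Ioi 0) := by
  have one_le_weight (t : ℝ) : 1 ≤ 1 + a / t ^ 2 := le_add_of_nonneg_right (by positivity)
  have weight_pos (t : ℝ) : 0 < 1 + a / t ^ 2 := one_pos.trans_le (one_le_weight t)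
  have norm_inv_le (t : ℝ) : ‖(1 + a / t ^ 2)⁻¹‖ ≤ 1 := by
    rw [norm_of_nonneg (inv_nonneg.2 (weight_pos t).le)]
    exact inv_le_one_of_one_le₀ (one_le_weight t)
  have inv_measurable : Measurable fun t : ℝ ↦ (1 + a / t ^ 2)⁻¹ := by fun_prop
  refine (hg.bdd_smul 1 inv_measurable.aestronglyMeasurable (.of_forall norm_inv_le)).congr
    (.of_forall fun t ↦ ?_)
  exact inv_smul_smul₀ (weight_pos t).ne' (g t)

lemma integral_Ioi_one_add_div_sq_smul_of_comp_div_eq {g : ℝ → E} (ha : 0 < a)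
    (hg : ∀ t, 0 < t → g (a / t) = g t) :
    ∫ t in Ioi 0, (1 + a / t ^ 2) • g t = (2 : ℝ) • ∫ t in Ioi 0, g t := by
  by_cases g_int : IntegrableOn g (Ioi 0)
  · have weighted_eqOn : EqOn (fun t ↦ (a / t ^ 2) • g (a / t))
        (fun t ↦ (a / t ^ 2) • g t) (Ioi 0) := fun t ht ↦ congrArg _ (hg t ht)
    have weighted_int : IntegrableOn (fun t ↦ (a / t ^ 2) • g t) (Ioi 0) :=
      ((integrableOn_Ioi_div_sq_smul_comp_div_iff g ha).2 g_int).congr_fun weighted_eqOn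
        measurableSet_Ioi
    simp only [add_smul, one_smul]
    rw [integral_add g_int weighted_int, ← setIntegral_congr_fun measurableSet_Ioi weighted_eqOn,
      integral_Ioi_div_sq_smul_comp_div g ha, two_smul]
  · rw [integral_undef g_int, smul_zero]
    exact integral_undef (mt (integrableOn_Ioi_of_one_add_div_sq_smul ha.le) g_int)

lemma hasDerivAt_mul_sub_div (b c : ℝ) {t : ℝ} (ht : t ≠ 0) :
    HasDerivAt (fun t ↦ b * t - c / t) (b + c / t ^ 2) t := by
  simpa [div_eq_mul_inv] using!
    ((hasDerivAt_id t).const_mul b).sub ((hasDerivAt_inv ht).const_mul c)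

lemma strictMonoOn_mul_sub_div (hb : 0 < b) (hc : 0 ≤ c) :
    StrictMonoOn (fun t ↦ b * t - c / t) (Ioi 0) := fun _ hs _ _ hst ↦
  (sub_lt_sub_right (mul_lt_mul_of_pos_left hst hb) _).trans_le
    (sub_le_sub_left (div_le_div_of_nonneg_left hc hs hst.le) _)

lemma image_mul_sub_div_Ioi (hb : 0 < b) (hc : 0 < c) :
    (fun t ↦ b * t - c / t) '' Ioi 0 = univ := by
  refine eq_univ_of_forall fun u ↦ ?_
  have root_sq : √(u ^ 2 + 4 * b * c) ^ 2 = u ^ 2 + 4 * b * c := sq_sqrt (by positivity)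
  have root_pos : 0 < u + √(u ^ 2 + 4 * b * c) := by
    have : |u| < √(u ^ 2 + 4 * b * c) :=
      lt_sqrt_of_sq_lt (by rw [sq_abs]; exact lt_add_of_pos_right _ (by positivity))
    linarith [neg_abs_le u]
  -- The preimage is the positive root of `b * t ^ 2 - u * t - c = 0`.
  refine ⟨(u + √(u ^ 2 + 4 * b * c)) / (2 * b), mem_Ioi.2 (by positivity), ?_⟩
  generalize √(u ^ 2 + 4 * b * c) = r at root_sq root_pos ⊢
  field_simp
  linarith

lemma integral_Ioi_deriv_smul_comp_mul_sub_div (f : ℝ → E) (hb : 0 < b) (hc : 0 < c) :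
    ∫ t in Ioi 0, (b + c / t ^ 2) • f (b * t - c / t) = ∫ u, f u := by
  have substitution := integral_image_eq_integral_deriv_smul_of_monotoneOn measurableSet_Ioi
    (fun t ht ↦ (hasDerivAt_mul_sub_div b c (ne_of_gt ht)).hasDerivWithinAt)
    (strictMonoOn_mul_sub_div hb hc.le).monotoneOn f
  rw [← substitution, image_mul_sub_div_Ioi hb hc, setIntegral_univ]

theorem integral_Ioi_comp_mul_sub_div_of_even {f : ℝ → E} (hf : f.Even) (hb : 0 < b) (hc : 0 < c) :
    ∫ t in Ioi 0, f (b * t - c / t) = (2 * b)⁻¹ • ∫ u, f u := by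
  have invariant (t : ℝ) (ht : 0 < t) :
      f (b * (c / b / t) - c / (c / b / t)) = f (b * t - c / t) := by
    have reflection : b * (c / b / t) - c / (c / b / t) = -(b * t - c / t) := by
      field_simp
      ring
    rw [reflection, hf]
  have weight_eq (t : ℝ) : b + c / t ^ 2 = b * (1 + c / b / t ^ 2) := by field_simp
  rw [← integral_Ioi_deriv_smul_comp_mul_sub_div f hb hc]
  simp only [weight_eq, mul_smul]
  rw [integral_smul, integral_Ioi_one_add_div_sq_smul_of_comp_div_eq (div_pos hc hb) invariant,
    smul_smul, smul_smul, mul_assoc, mul_comm b 2, inv_mul_cancel₀ (by positivity), one_smul]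

end CauchySchlomilch

section ExpNegMulSubDiv

variable {p q : ℝ}

lemma exp_neg_mul_sq_sub_div_sq {t : ℝ} (hp : 0 ≤ p) (hq : 0 ≤ q) (ht : t ≠ 0) :
    exp (-p * t ^ 2 - q / t ^ 2) =
      exp (-2 * √(p * q)) * exp (-1 * (√p * t - √q / t) ^ 2) := by
  rw [← exp_add, sqrt_mul hp]
  congr 1
  nth_rw 1 [← sq_sqrt hp, ← sq_sqrt hq]
  field_simp
  ring

theorem integral_Ioi_exp_neg_mul_sq_sub_div_sq (hp : 0 < p) (hq : 0 ≤ q) :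
    ∫ t in Ioi 0, exp (-p * t ^ 2 - q / t ^ 2) = √(π / p) / 2 * exp (-2 * √(p * q)) := by
  obtain rfl | hq := hq.eq_or_lt
  · simpa using integral_gaussian_Ioi p
  have gaussian_even : Function.Even fun u : ℝ ↦ exp (-1 * u ^ 2) := fun u ↦ by simp only [neg_sq]
  calc ∫ t in Ioi 0, exp (-p * t ^ 2 - q / t ^ 2)
      = ∫ t in Ioi 0, exp (-2 * √(p * q)) * exp (-1 * (√p * t - √q / t) ^ 2) :=
        setIntegral_congr_fun measurableSet_Ioi fun t ht ↦
          exp_neg_mul_sq_sub_div_sq hp.le hq.le (ne_of_gt ht)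
    _ = exp (-2 * √(p * q)) * ((2 * √p)⁻¹ * √(π / 1)) := by
        rw [integral_const_mul,
          integral_Ioi_comp_mul_sub_div_of_even gaussian_even (sqrt_pos.2 hp) (sqrt_pos.2 hq),
          integral_gaussian, smul_eq_mul]
    _ = √(π / p) / 2 * exp (-2 * √(p * q)) := by
        rw [div_one, sqrt_div pi_pos.le]
        field_simp

theorem integral_Ioi_rpow_neg_half_mul_exp (hp : 0 < p) (hq : 0 ≤ q) :
    ∫ w in Ioi 0, w ^ (-(1 : ℝ) / 2) * exp (-p * w - q / w) = √(π / p) * exp (-2 * √(p * q)) := by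
  rw [← integral_comp_rpow_Ioi_of_pos two_pos]
  calc _ = ∫ t in Ioi 0, 2 * exp (-p * t ^ 2 - q / t ^ 2) := by
        refine setIntegral_congr_fun measurableSet_Ioi fun t ht ↦ ?_
        have jacobian_cancel : t * (t ^ 2) ^ (-(1 : ℝ) / 2) = 1 := by
          rw [neg_div, rpow_neg (sq_nonneg t), ← sqrt_eq_rpow, sqrt_sq (le_of_lt ht),
            mul_inv_cancel₀ (ne_of_gt ht)]
        simp only [show (2 : ℝ) - 1 = 1 by norm_num, rpow_two, rpow_one, smul_eq_mul]
        linear_combination 2 * exp (-p * t ^ 2 - q / t ^ 2) * jacobian_cancel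
    _ = √(π / p) * exp (-2 * √(p * q)) := by
        rw [integral_const_mul, integral_Ioi_exp_neg_mul_sq_sub_div_sq hp hq]
        ring

end ExpNegMulSubDiv

lemma normal_mul_exponential_density_eq (lam m x : ℝ) {w : ℝ} (hw : 0 ≤ w) :
    (2 * π * w) ^ (-(1 : ℝ) / 2) * exp (-(x - m) ^ 2 / (2 * w)) *
        ((lam ^ 2 / 2) * exp (-(lam ^ 2 * w) / 2)) =
      (√(2 * π))⁻¹ * (lam ^ 2 / 2) *
        (w ^ (-(1 : ℝ) / 2) * exp (-(lam ^ 2 / 2) * w - (x - m) ^ 2 / 2 / w)) := by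
  have normalization : (2 * π) ^ (-(1 : ℝ) / 2) = (√(2 * π))⁻¹ := by
    rw [neg_div, rpow_neg two_pi_pos.le, ← sqrt_eq_rpow]
  have exponent : -(lam ^ 2 / 2) * w - (x - m) ^ 2 / 2 / w =
      -(x - m) ^ 2 / (2 * w) + -(lam ^ 2 * w) / 2 := by
    rw [div_div]
    ring
  rw [mul_rpow two_pi_pos.le hw, normalization, exponent, exp_add]
  ring

theorem stmt_12 (lam m x : ℝ) (hlam : 0 < lam) :
    ∫ w in Set.Ioi (0 : ℝ),
        (2 * Real.pi * w) ^ (-(1 : ℝ) / 2) * Real.exp (-(x - m) ^ 2 / (2 * w)) *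
          ((lam ^ 2 / 2) * Real.exp (-(lam ^ 2 * w) / 2))
      = (lam / 2) * Real.exp (-lam * |x - m|) := by
  have decay : -2 * √(lam ^ 2 / 2 * ((x - m) ^ 2 / 2)) = -lam * |x - m| := by
    rw [show lam ^ 2 / 2 * ((x - m) ^ 2 / 2) = (lam * (x - m) / 2) ^ 2 by ring, sqrt_sq_eq_abs,
      abs_div, abs_mul, abs_of_pos hlam, abs_two]
    ring
  have constant : √(π / (lam ^ 2 / 2)) = √(2 * π) / lam := by
    rw [div_div_eq_mul_div, mul_comm π, sqrt_div two_pi_pos.le, sqrt_sq hlam.le]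
  rw [setIntegral_congr_fun measurableSet_Ioi fun w hw ↦
      normal_mul_exponential_density_eq lam m x (le_of_lt hw),
    integral_const_mul, integral_Ioi_rpow_neg_half_mul_exp (by positivity) (by positivity),
    decay, constant]
  field_simp
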